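/- The Shrikhande graph contains no induced subgraph isomorphic to the complement of the 6-cycle; that is, there is no injective map f from Fin 6 to its vertex set such that f(i) and f(j) are adjacent if and only if i ≠ j and i and j are not consecutive modulo 6. -/

import Mathlib

/-!
The complement of the 6-cycle is the triangular prism. Two of its 4-cycles, `0 2 5 3` and
`0 4 1 3`, share the edge `0 – 3`; both are induced. In the Shrikhande graph, however, every
induced 4-cycle `a b c d` satisfies `b + d = a + a`, so `b` is determined by `a` and `d`.

Indeed, the reflection `x ↦ b + d - x` permutes the common neighbours of `b` and `d` in a Cayley
graph of an abelian group. Nonadjacent vertices of the Shrikhande graph have only two common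
neighbours, so the reflection either fixes `a`, as claimed, or swaps `a` and `c`. In the latter
case `b - a` and `d - a` are distinct elements of the connection set `{±x, ±y, ±(x + y)}` whose
difference `b - d` and whose sum `c - a` lie outside it. This is possible only for opposite
elements, but then `c = a`.
-/

/-- The Shrikhande graph on `(ZMod 4) × (ZMod 4)`: distinct vertices `(a,b)` and `(c,d)` are
adjacent iff `(a-c, b-d) ∈ {(0,1),(0,3),(1,0),(3,0),(1,1),(3,3)}` (arithmetic mod 4; this
difference set is closed under negation, so the symmetrization `fromRel` does not change it). -/
def shrikhande : SimpleGraph (ZMod 4 × ZMod 4) :=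
  SimpleGraph.fromRel (fun u v =>
    (u.1 - v.1, u.2 - v.2) ∈
      ({(0, 1), (0, 3), (1, 0), (3, 0), (1, 1), (3, 3)} : Finset (ZMod 4 × ZMod 4)))

/-- `IsInducedSquare G a b c d` says that `a b c d` is, in this cyclic order, an induced 4-cycle
of `G`. -/
structure IsInducedSquare {V : Type*} (G : SimpleGraph V) (a b c d : V) : Prop where
  adj_ab : G.Adj a b
  adj_bc : G.Adj b c
  adj_cd : G.Adj c d
  adj_da : G.Adj d a
  ne_ac : a ≠ c
  not_adj_ac : ¬ G.Adj a c
  ne_bd : b ≠ d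
  not_adj_bd : ¬ G.Adj b d

theorem IsInducedSquare.map {V W : Type*} {G : SimpleGraph V} {H : SimpleGraph W} {a b c d : V}
    (h : IsInducedSquare G a b c d) (φ : G ↪g H) :
    IsInducedSquare H (φ a) (φ b) (φ c) (φ d) where
  adj_ab := φ.map_adj_iff.mpr h.adj_ab
  adj_bc := φ.map_adj_iff.mpr h.adj_bc
  adj_cd := φ.map_adj_iff.mpr h.adj_cd
  adj_da := φ.map_adj_iff.mpr h.adj_da
  ne_ac := φ.injective.ne h.ne_ac
  not_adj_ac := φ.map_adj_iff.not.mpr h.not_adj_ac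
  ne_bd := φ.injective.ne h.ne_bd
  not_adj_bd := φ.map_adj_iff.not.mpr h.not_adj_bd

section Circulant

open SimpleGraph

variable {A : Type*} [AddCommGroup A] {S : Set A}

theorem circulantGraph_adj_add_sub_iff {u v x : A} :
    (circulantGraph S).Adj u (u + v - x) ↔ (circulantGraph S).Adj x v := by
  have translated := circulantGraph_adj_translate (s := S) (u := x) (v := v) (d := u - x)
  rwa [add_sub_cancel, add_sub_left_comm, ← add_sub_assoc] at translated

theorem add_sub_mem_commonNeighbors_circulantGraph {u v x : A}
    (hx : x ∈ (circulantGraph S).commonNeighbors u v) :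
    u + v - x ∈ (circulantGraph S).commonNeighbors u v := by
  rw [mem_commonNeighbors] at hx ⊢
  refine ⟨circulantGraph_adj_add_sub_iff.mpr hx.2.symm, ?_⟩
  rw [add_comm u v]
  exact circulantGraph_adj_add_sub_iff.mpr hx.1.symm

theorem IsInducedSquare.add_eq_add_self_or_add_eq_add {a b c d : A}
    (h : IsInducedSquare (circulantGraph S) a b c d)
    (card_le : ((circulantGraph S).commonNeighbors b d).encard ≤ 2) :
    b + d = a + a ∨ b + d = a + c := by
  have ha : a ∈ (circulantGraph S).commonNeighbors b d := ⟨h.adj_ab.symm, h.adj_da⟩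
  have hc : c ∈ (circulantGraph S).commonNeighbors b d := ⟨h.adj_bc, h.adj_cd.symm⟩
  have hrefl := add_sub_mem_commonNeighbors_circulantGraph ha
  have pair_eq : {a, c} = (circulantGraph S).commonNeighbors b d :=
    (Set.toFinite {a, c}).eq_of_subset_of_encard_le (Set.pair_subset ha hc)
      (card_le.trans_eq (Set.encard_pair h.ne_ac).symm)
  rw [← pair_eq, Set.mem_insert_iff, Set.mem_singleton_iff] at hrefl
  exact hrefl.imp sub_eq_iff_eq_add.mp sub_eq_iff_eq_add'.mp

end Circulant

/-- The connection set of the Shrikhande graph as a Cayley graph of `(ZMod 4)²`; a `Finset`, so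
that membership is decidable. -/
def shrikhandeConnectionSet : Finset (ZMod 4 × ZMod 4) :=
  {(0, 1), (0, 3), (1, 0), (3, 0), (1, 1), (3, 3)}

theorem neg_mem_shrikhandeConnectionSet :
    ∀ s ∈ shrikhandeConnectionSet, -s ∈ shrikhandeConnectionSet := by
  decide

theorem add_eq_zero_or_sub_mem_or_add_mem_shrikhandeConnectionSet :
    ∀ s ∈ shrikhandeConnectionSet, ∀ t ∈ shrikhandeConnectionSet, s ≠ t →
      s + t = 0 ∨ s - t ∈ shrikhandeConnectionSet ∨ s + t ∈ shrikhandeConnectionSet := by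
  decide

theorem shrikhande_eq_circulantGraph :
    shrikhande = SimpleGraph.circulantGraph (shrikhandeConnectionSet : Set (ZMod 4 × ZMod 4)) :=
  rfl

theorem shrikhande_adj_iff {u v : ZMod 4 × ZMod 4} :
    shrikhande.Adj u v ↔ u - v ∈ shrikhandeConnectionSet := by
  have zero_notMem : (0 : ZMod 4 × ZMod 4) ∉ shrikhandeConnectionSet := by decide
  rw [shrikhande_eq_circulantGraph, SimpleGraph.circulantGraph_adj, Finset.mem_coe, Finset.mem_coe]
  constructor
  · rintro ⟨-, huv | hvu⟩
    · exact huv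
    · exact neg_sub v u ▸ neg_mem_shrikhandeConnectionSet _ hvu
  · intro huv
    refine ⟨fun heq => zero_notMem ?_, Or.inl huv⟩
    rwa [heq, sub_self] at huv

instance : DecidableRel shrikhande.Adj :=
  fun _ _ => decidable_of_iff' _ shrikhande_adj_iff

theorem shrikhande_isSRGWith : shrikhande.IsSRGWith 16 6 2 2 where
  card := rfl
  regular := by
    unfold SimpleGraph.IsRegularOfDegree
    decide +kernel
  of_adj := by decide +kernel
  of_not_adj := by
    unfold Pairwise
    decide +kernel

theorem encard_commonNeighbors_shrikhande {u v : ZMod 4 × ZMod 4} (hne : u ≠ v)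
    (hadj : ¬ shrikhande.Adj u v) : (shrikhande.commonNeighbors u v).encard = 2 := by
  rw [← Set.coe_fintypeCard, shrikhande_isSRGWith.of_not_adj hne hadj, Nat.cast_ofNat]

namespace IsInducedSquare

variable {a b b' c c' d : ZMod 4 × ZMod 4}

theorem shrikhande_add_eq_add_self (h : IsInducedSquare shrikhande a b c d) :
    b + d = a + a := by
  have card_common := encard_commonNeighbors_shrikhande h.ne_bd h.not_adj_bd
  refine (add_eq_add_self_or_add_eq_add h card_common.le).resolve_right fun hbd => ?_
  have hb : b - a ∈ shrikhandeConnectionSet := shrikhande_adj_iff.mp h.adj_ab.symm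
  have hd : d - a ∈ shrikhandeConnectionSet := shrikhande_adj_iff.mp h.adj_da
  have diff_eq : (b - a) - (d - a) = b - d := sub_sub_sub_cancel_right b d a
  have sum_eq : (b - a) + (d - a) = c - a := by
    rw [sub_add_sub_comm, hbd, add_sub_add_left_eq_sub]
  obtain hzero | hdiff | hsum := add_eq_zero_or_sub_mem_or_add_mem_shrikhandeConnectionSet
    _ hb _ hd (mt sub_left_inj.mp h.ne_bd)
  · exact h.ne_ac (sub_eq_zero.mp (sum_eq ▸ hzero)).symm
  · exact h.not_adj_bd (shrikhande_adj_iff.mpr (diff_eq ▸ hdiff))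
  · exact h.not_adj_ac (shrikhande_adj_iff.mpr (sum_eq ▸ hsum)).symm

theorem shrikhande_eq_of_common_edge (h : IsInducedSquare shrikhande a b c d)
    (h' : IsInducedSquare shrikhande a b' c' d) : b = b' :=
  add_right_cancel (h.shrikhande_add_eq_add_self.trans h'.shrikhande_add_eq_add_self.symm)

end IsInducedSquare

open SimpleGraph in
theorem isEmpty_compl_cycleGraph_six_embedding_shrikhande :
    IsEmpty ((cycleGraph 6)ᶜ ↪g shrikhande) := by
  refine ⟨fun φ => ?_⟩
  have square : IsInducedSquare (cycleGraph 6)ᶜ 0 2 5 3 := by constructor <;> decide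
  have square' : IsInducedSquare (cycleGraph 6)ᶜ 0 4 1 3 := by constructor <;> decide
  have heq : φ 2 = φ 4 := (square.map φ).shrikhande_eq_of_common_edge (square'.map φ)
  exact absurd (φ.injective heq) (by decide)

theorem compl_cycleGraph_six_adj_iff : ∀ i j : Fin 6, (SimpleGraph.cycleGraph 6)ᶜ.Adj i j ↔
    (i ≠ j ∧ ¬ ((i.val + 1) % 6 = j.val ∨ (j.val + 1) % 6 = i.val)) := by
  decide

/-- The Shrikhande graph has no induced subgraph isomorphic to the complement of the 6-cycle. -/
theorem shrikhande_no_induced_complement_C6 :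
    ¬ ∃ f : Fin 6 → ZMod 4 × ZMod 4, Function.Injective f ∧
      ∀ i j : Fin 6, shrikhande.Adj (f i) (f j) ↔
        (i ≠ j ∧ ¬ ((i.val + 1) % 6 = j.val ∨ (j.val + 1) % 6 = i.val)) := by
  rintro ⟨f, hf, hadj⟩
  exact isEmpty_compl_cycleGraph_six_embedding_shrikhande.false
    ⟨⟨f, hf⟩, fun {i j} => (hadj i j).trans (compl_cycleGraph_six_adj_iff i j).symm⟩
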